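/- Let K ⊂ ℝ² be an equilateral triangle with center at the origin and K° its polar. Then every simple classical closed billiard trajectory in the hexagon K − K with geometry given by K° is 4-periodic and has length 9 measured in the norm ‖q‖_{K°} = max_{p∈K°}⟨p,q⟩. Moreover, arbitrarily close to any point of ∂((K−K) × K°) there passes such a shortest billiard trajectory. -/

import Mathlib

open scoped RealInnerProductSpace Pointwise

namespace Billiard2

/-- The Euclidean plane. -/
abbrev E2 := EuclideanSpace ℝ (Fin 2)

/-- The polar body `K° = {p : ⟨p, q⟩ ≤ 1 for all q ∈ K}`. -/
def polarBody (K : Set E2) : Set E2 := {p | ∀ q ∈ K, ⟪p, q⟫ ≤ 1}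

/-- `u` is the outer normal of the edge of `H` containing `q`, normalized to lie in `∂H°`:
`u ∈ H°`, `⟨u, q⟩ = 1`, and `u` is the unique such vector. Uniqueness encodes that `q` lies
in the relative interior of an edge of the polygon `H`. -/
def IsUniqueNormal (H : Set E2) (q u : E2) : Prop :=
  u ∈ polarBody H ∧ ⟪u, q⟫ = 1 ∧ ∀ v ∈ polarBody H, ⟪v, q⟫ = 1 → v = u

/-- A classical closed billiard trajectory in the configuration `H × T` (with `T = H°`):
closed `m`-periodic sequences of coordinates `q i ∈ ∂H` and momenta `p i ∈ ∂T`, each in the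
relative interior of an edge (encoded by uniqueness of the normalized outer normal),
satisfying the reflection rule `p (i+1) − p i = −λ i • n_H(q i)` with `λ i > 0` and the
motion rule `q (i+1) − q i = μ i • n_T(p (i+1))` with `μ i > 0`. -/
structure ClassicalTraj (H T : Set E2) where
  m : ℕ
  m_pos : 0 < m
  q : ℕ → E2
  p : ℕ → E2
  nq : ℕ → E2
  np : ℕ → E2
  lam : ℕ → ℝ
  mu : ℕ → ℝ
  q_mem : ∀ i, q i ∈ frontier H
  p_mem : ∀ i, p i ∈ frontier T
  q_periodic : ∀ i, q (i + m) = q i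
  p_periodic : ∀ i, p (i + m) = p i
  nq_spec : ∀ i, IsUniqueNormal H (q i) (nq i)
  np_spec : ∀ i, IsUniqueNormal T (p i) (np i)
  lam_pos : ∀ i, 0 < lam i
  mu_pos : ∀ i, 0 < mu i
  reflection : ∀ i, p (i + 1) - p i = (-(lam i)) • nq i
  motion : ∀ i, q (i + 1) - q i = mu i • np (i + 1)

/-- A trajectory is simple if it does not traverse the same closed route more than once,
i.e. it has no period smaller than `m`. -/
def ClassicalTraj.IsSimple {H T : Set E2} (τ : ClassicalTraj H T) : Prop :=
  ∀ d : ℕ, 0 < d → d < τ.m → ¬(∀ i, τ.q (i + d) = τ.q i ∧ τ.p (i + d) = τ.p i)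

/-- The length of the trajectory, measured in the norm `‖v‖_T = max_{p ∈ T} ⟨p, v⟩`
(with `T = H°`). -/
noncomputable def ClassicalTraj.length {H T : Set E2} (τ : ClassicalTraj H T) : ℝ :=
  ∑ i ∈ Finset.range τ.m, sSup ((fun p => ⟪p, τ.q (i + 1) - τ.q i⟫) '' T)

/-- The trace of a trajectory in phase space `∂H × ∂T`: the union of the segments swept by
the coordinate while the momentum is constant, and by the momentum while the coordinate is
constant. -/
noncomputable def ClassicalTraj.trace {H T : Set E2} (τ : ClassicalTraj H T) :
    Set (E2 × E2) :=
  ⋃ i ∈ Finset.range τ.m,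
    ((fun x => (x, τ.p (i + 1))) '' segment ℝ (τ.q i) (τ.q (i + 1)) ∪
      (fun y => (τ.q i, y)) '' segment ℝ (τ.p i) (τ.p (i + 1)))

end Billiard2

/-!
In the coordinates `u_i`, `x_i` of position and momentum dual to the vertices of the triangle, both
summing to `0`, the hexagon is `|u_i| ≤ 1` and the polar triangle is `x_i ≤ 1`. Up to relabelling
the vertices, the billiard started on the edge `u_0 = 1` is forced, from
`u = (1, -b, b - 1)`, `x = (1, y, -1 - y)` to `u = (1 - b, b, -1)`, `x = (2y - 1, 1, -2y)`, and from
there to the first phase again with `(b, y)` replaced by `(1 - b, 1/2 - y)` and the vertices `0` and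
`2` exchanged. Doing this twice is the identity, so every orbit closes up after four bounces, with
flights of lengths `3b`, `3`, `3(1 - b)`, `3`. The first coordinate of the position tells the four
phases apart, so `4` is the exact period. Finally, as `b` and `y` range over the closed parameter
intervals, the segments swept by the first two bounces and their relabellings cover the boundary of
the phase space; the open parameter intervals are dense in these.
-/

namespace Billiard2

lemma exists_pos_add_smul_mem {E : Type*} [AddCommGroup E] [Module ℝ E] [TopologicalSpace E]
    [ContinuousAdd E] [ContinuousSMul ℝ E] {S : Set E} {x : E} (hS : S ∈ nhds x) (d : E) :
    ∃ t : ℝ, 0 < t ∧ x + t • d ∈ S := by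
  have hlim : Filter.Tendsto (fun t : ℝ => x + t • d) (nhds 0) (nhds x) :=
    Continuous.tendsto' (by fun_prop) _ _ (by simp)
  have hev : ∀ᶠ t : ℝ in nhdsWithin 0 (Set.Ioi 0), x + t • d ∈ S :=
    (hlim.eventually hS).filter_mono nhdsWithin_le_nhds
  exact (eventually_mem_nhdsWithin.and hev).exists

lemma exists_mem_Icc_mul_eq {a c : ℝ} (ha : 0 ≤ a) (hac : a ≤ c) :
    ∃ s ∈ Set.Icc (0 : ℝ) 1, s * c = a :=
  ⟨a / c, ⟨div_nonneg ha (ha.trans hac), div_le_one_of_le₀ hac (ha.trans hac)⟩,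
    div_mul_cancel_of_imp fun hc => le_antisymm (hac.trans hc.le) ha⟩

lemma exists_perm_apply_le {ι α : Type*} [LinearOrder α] {a b c : ι} (hca : c ≠ a) (hcb : c ≠ b)
    (i : ι) (f : ι → α) : ∃ σ : Equiv.Perm ι, σ c = i ∧ f (σ a) ≤ f (σ b) := by
  classical
  rcases le_total (f (Equiv.swap c i a)) (f (Equiv.swap c i b)) with h | h
  · exact ⟨Equiv.swap c i, Equiv.swap_apply_left c i, h⟩
  · refine ⟨(Equiv.swap a b).trans (Equiv.swap c i), ?_, ?_⟩
    · rw [Equiv.trans_apply, Equiv.swap_apply_of_ne_of_ne hca hcb, Equiv.swap_apply_left]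
    · rwa [Equiv.trans_apply, Equiv.trans_apply, Equiv.swap_apply_left, Equiv.swap_apply_right]

lemma affineIndependent_of_dist_eq {V P : Type*} [NormedAddCommGroup V] [NormedSpace ℝ V]
    [MetricSpace P] [NormedAddTorsor V P] {a b c : P} (hpos : 0 < dist a b)
    (hab : dist a b = dist b c) (hbc : dist b c = dist c a) :
    AffineIndependent ℝ ![a, b, c] := by
  rw [affineIndependent_iff_not_collinear_set]
  intro hcol
  rcases hcol.wbtw_or_wbtw_or_wbtw with h | h | h
  · linarith [h.dist_add_dist, dist_comm a c]
  · linarith [h.dist_add_dist, dist_comm b a]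
  · linarith [h.dist_add_dist, dist_comm c b]

/-! ### Polar bodies of finite sets -/

lemma mem_polarBody {S : Set E2} {p : E2} : p ∈ polarBody S ↔ ∀ q ∈ S, ⟪q, p⟫ ≤ 1 := by
  simp only [polarBody, Set.mem_ofPred_eq, real_inner_comm]

lemma isClosed_polarBody (S : Set E2) : IsClosed (polarBody S) := by
  have hinter : polarBody S = ⋂ q ∈ S, {p | ⟪q, p⟫ ≤ 1} := by
    ext p
    simp [mem_polarBody]
  rw [hinter]
  exact isClosed_biInter fun q _ => isClosed_le (by fun_prop) continuous_const

lemma polarBody_convexHull (S : Set E2) : polarBody (convexHull ℝ S) = polarBody S :=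
  Set.Subset.antisymm (fun _ hp q hq => hp q (subset_convexHull ℝ S hq)) fun p hp _ hq =>
    convexHull_min (t := {q | ⟪p, q⟫ ≤ 1}) hp (convex_halfSpace_le (innerₛₗ ℝ p).isLinear 1) hq

lemma subset_polarBody_polarBody (S : Set E2) : S ⊆ polarBody (polarBody S) :=
  fun _ hq => mem_polarBody.2 fun _ hp => hp _ hq

lemma polarBody_mem_nhds {P : Set E2} (hP : P.Finite) {p : E2} (hp : ∀ u ∈ P, ⟪u, p⟫ < 1) :
    polarBody P ∈ nhds p := by
  have hlt : ∀ u ∈ P, ∀ᶠ x in nhds p, ⟪u, x⟫ < 1 := fun u hu =>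
    ContinuousAt.eventually_lt (by fun_prop) continuousAt_const (hp u hu)
  filter_upwards [(Filter.eventually_all_finite hP).2 hlt] with x hx
  exact mem_polarBody.2 fun u hu => (hx u hu).le

lemma mem_frontier_polarBody_iff {P : Set E2} (hP : P.Finite) {p : E2} :
    p ∈ frontier (polarBody P) ↔ p ∈ polarBody P ∧ ∃ u ∈ P, ⟪u, p⟫ = 1 := by
  rw [(isClosed_polarBody P).frontier_eq, Set.mem_sdiff]
  refine and_congr_right fun hp => ⟨fun hint => ?_, ?_⟩
  · by_contra! hne
    exact hint <| mem_interior_iff_mem_nhds.2 <| polarBody_mem_nhds hP fun u hu =>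
      (mem_polarBody.1 hp u hu).lt_of_ne (hne u hu)
  · rintro ⟨u, hu, hup⟩ hint
    obtain ⟨t, ht, hmem⟩ := exists_pos_add_smul_mem (mem_interior_iff_mem_nhds.1 hint) p
    have hle := mem_polarBody.1 hmem u hu
    rw [inner_add_right, real_inner_smul_right, hup] at hle
    linarith

/-- `x` lies in the relative interior of an edge of `S`, and `u` is the outer normal of that edge,
normalized to lie in the boundary of the polar body of `S`. -/
def HasOuterNormal (S : Set E2) (x u : E2) : Prop :=
  x ∈ frontier S ∧ IsUniqueNormal S x u

lemma HasOuterNormal.unique {S : Set E2} {x u v : E2} (hu : HasOuterNormal S x u)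
    (hv : HasOuterNormal S x v) : u = v :=
  hv.2.2.2 u hu.2.1 hu.2.2.1

lemma exists_pos_add_smul_mem_polarBody {P : Set E2} (hP : P.Finite) {x u d : E2}
    (hux : ⟪u, x⟫ = 1) (hlt : ∀ v ∈ P, v ≠ u → ⟪v, x⟫ < 1) (hud : ⟪u, d⟫ = 0) :
    ∃ t : ℝ, 0 < t ∧ x + t • d ∈ polarBody P := by
  have hnhds : polarBody (P \ {u}) ∈ nhds x :=
    polarBody_mem_nhds hP.sdiff fun v hv => hlt v hv.1 hv.2
  obtain ⟨t, ht, hmem⟩ := exists_pos_add_smul_mem hnhds d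
  refine ⟨t, ht, mem_polarBody.2 fun v hv => ?_⟩
  rcases eq_or_ne v u with rfl | hvu
  · rw [inner_add_right, real_inner_smul_right, hux, hud, mul_zero, add_zero]
  · exact mem_polarBody.1 hmem v ⟨hv, hvu⟩

lemma isUniqueNormal_polarBody {P : Set E2} (hP : P.Finite) {x u : E2} (hu : u ∈ P)
    (hux : ⟪u, x⟫ = 1) (hlt : ∀ v ∈ P, v ≠ u → ⟪v, x⟫ < 1) :
    IsUniqueNormal (polarBody P) x u := by
  refine ⟨subset_polarBody_polarBody P hu, hux, fun v hv hvx => ?_⟩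
  -- The direction of the edge on the side to which `v` tilts: moving there from `x` would increase
  -- the inner product with `v` beyond `1`.
  set d : E2 := (v - u) - ⟪u, v - u⟫ • x with hd
  have hud : ⟪u, d⟫ = 0 := by
    rw [hd, inner_sub_right, real_inner_smul_right, hux]
    ring
  have hvd : ⟪v, d⟫ = ‖v - u‖ ^ 2 := by
    rw [hd, inner_sub_right, real_inner_smul_right, hvx, ← real_inner_self_eq_norm_sq,
      inner_sub_left v u]
    ring
  obtain ⟨t, ht, hmem⟩ := exists_pos_add_smul_mem_polarBody hP hux hlt hud
  have hle := hv _ hmem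
  rw [inner_add_right, real_inner_smul_right, hvx, hvd] at hle
  have hsq : ‖v - u‖ ^ 2 ≤ 0 := nonpos_of_mul_nonpos_right (by linarith) ht
  exact sub_eq_zero.1 (norm_eq_zero.1 (pow_eq_zero_iff two_ne_zero |>.1
    (le_antisymm hsq (sq_nonneg _))))

lemma hasOuterNormal_polarBody_iff {P : Set E2} (hP : P.Finite) {x u : E2} :
    HasOuterNormal (polarBody P) x u ↔ u ∈ P ∧ ⟪u, x⟫ = 1 ∧ ∀ v ∈ P, v ≠ u → ⟪v, x⟫ < 1 := by
  constructor
  · rintro ⟨hx, -, -, huniq⟩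
    obtain ⟨hxP, w, hw, hwx⟩ := (mem_frontier_polarBody_iff hP).1 hx
    obtain rfl := huniq w (subset_polarBody_polarBody P hw) hwx
    refine ⟨hw, hwx, fun v hv hvw => (mem_polarBody.1 hxP v hv).lt_of_ne fun hvx => hvw ?_⟩
    exact huniq v (subset_polarBody_polarBody P hv) hvx
  · rintro ⟨hu, hux, hlt⟩
    have hxP : x ∈ polarBody P := mem_polarBody.2 fun v hv => by
      rcases eq_or_ne v u with rfl | hvu
      exacts [hux.le, (hlt v hv hvu).le]
    exact ⟨(mem_frontier_polarBody_iff hP).2 ⟨hxP, u, hu, hux⟩,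
      isUniqueNormal_polarBody hP hu hux hlt⟩

/-! ### Triangles and their dual frames -/

/-- The vertices of a triangle with centroid `0`, together with the vectors representing its
barycentric coordinates: the `i`-th one is `⟪dual i, ·⟫ + 1 / 3`. -/
structure DualFrame where
  vertex : Fin 3 → E2
  dual : Fin 3 → E2
  inner_dual_vertex : ∀ i j, ⟪dual i, vertex j⟫ = if i = j then 2 / 3 else -1 / 3
  sum_inner_smul_vertex : ∀ q, ∑ i, ⟪dual i, q⟫ • vertex i = q

namespace DualFrame

variable (F : DualFrame)

/-- Linear coordinates of the plane with sum `0`: barycentric coordinates minus `1 / 3`. -/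
noncomputable def coord (q : E2) (i : Fin 3) : ℝ := ⟪F.dual i, q⟫

lemma coord_add (q q' : E2) (i : Fin 3) : F.coord (q + q') i = F.coord q i + F.coord q' i :=
  inner_add_right _ _ _

lemma coord_sub (q q' : E2) (i : Fin 3) : F.coord (q - q') i = F.coord q i - F.coord q' i :=
  inner_sub_right _ _ _

lemma coord_neg (q : E2) (i : Fin 3) : F.coord (-q) i = -F.coord q i :=
  inner_neg_right _ _

lemma coord_smul (t : ℝ) (q : E2) (i : Fin 3) : F.coord (t • q) i = t * F.coord q i :=
  real_inner_smul_right _ _ _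

lemma coord_vertex (i j : Fin 3) : F.coord (F.vertex j) i = if i = j then 2 / 3 else -1 / 3 :=
  F.inner_dual_vertex i j

lemma sum_coord_smul_vertex (q : E2) : ∑ i, F.coord q i • F.vertex i = q :=
  F.sum_inner_smul_vertex q

lemma sum_coord (q : E2) : F.coord q 0 + F.coord q 1 + F.coord q 2 = 0 := by
  have h := congrArg (fun x => F.coord x 0 + F.coord x 1 + F.coord x 2) (F.sum_coord_smul_vertex q)
  simp only [Fin.sum_univ_three, coord_add, coord_smul, coord_vertex, Fin.reduceEq, if_true,
    if_false] at h
  linarith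

variable {F} in
lemma ext_coord {q q' : E2} (h : ∀ i, F.coord q i = F.coord q' i) : q = q' := by
  rw [← F.sum_coord_smul_vertex q, ← F.sum_coord_smul_vertex q', funext h]

lemma sub_eq_smul_vertex_iff {q q' : E2} {t : ℝ} {j : Fin 3} : q' - q = t • F.vertex j ↔
    ∀ i, F.coord q' i = F.coord q i + t * if i = j then 2 / 3 else -1 / 3 := by
  constructor
  · intro h i
    rw [eq_add_of_sub_eq' h, coord_add, coord_smul, coord_vertex]
  · intro h
    refine F.ext_coord fun i => ?_
    rw [coord_sub, h, coord_smul, coord_vertex, add_sub_cancel_left]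

/-- The dual triangle; its coordinates are the inner products with the vertices of `F`. -/
def symm : DualFrame where
  vertex := F.dual
  dual := F.vertex
  inner_dual_vertex i j := by
    simp only [real_inner_comm (F.dual j), F.inner_dual_vertex, eq_comm (a := i)]
  sum_inner_smul_vertex p := by
    refine ext_inner_right ℝ fun q => ?_
    conv_rhs => rw [← F.sum_inner_smul_vertex q]
    simp only [sum_inner, inner_sum, real_inner_smul_left, real_inner_smul_right,
      real_inner_comm p, mul_comm]

lemma vertex_injective : Function.Injective F.vertex := fun i j hij => by
  by_contra hne
  have h := congrArg (F.coord · i) hij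
  simp only [coord_vertex, if_true, if_neg hne] at h
  norm_num at h

lemma vertex_ne_neg_vertex (i j : Fin 3) : F.vertex i ≠ -F.vertex j := fun hij => by
  have h := congrArg (F.coord · i) hij
  simp only [coord_neg, coord_vertex, if_true] at h
  split_ifs at h <;> norm_num at h

/-- The point whose coordinates are the projection of `a` to the triples with sum `0`. -/
noncomputable def point (a : Fin 3 → ℝ) : E2 := ∑ i, a i • F.vertex i

lemma coord_point (a : Fin 3 → ℝ) (i : Fin 3) :
    F.coord (F.point a) i = a i - (a 0 + a 1 + a 2) / 3 := by
  have hsum : F.coord (F.point a) i = ∑ j, a j * F.coord (F.vertex j) i := by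
    simp only [coord, point, inner_sum, real_inner_smul_right]
  rw [hsum]
  fin_cases i <;>
  · simp [Fin.sum_univ_three, coord_vertex]
    ring

lemma continuous_point : Continuous F.point := by
  unfold point
  fun_prop

/-- Relabelling of the vertices. -/
@[simps]
def reindex (σ : Equiv.Perm (Fin 3)) : DualFrame where
  vertex i := F.vertex (σ i)
  dual i := F.dual (σ i)
  inner_dual_vertex i j := by simp only [F.inner_dual_vertex, σ.injective.eq_iff]
  sum_inner_smul_vertex q :=
    (Equiv.sum_comp σ fun i => ⟪F.dual i, q⟫ • F.vertex i).trans (F.sum_inner_smul_vertex q)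

lemma mem_convexHull_range_vertex_iff {q : E2} :
    q ∈ convexHull ℝ (Set.range F.vertex) ↔ ∀ i, -1 / 3 ≤ F.coord q i := by
  constructor
  · intro hq i
    refine convexHull_min (t := {x | -1 / 3 ≤ ⟪F.dual i, x⟫}) ?_
      (convex_halfSpace_ge (innerₛₗ ℝ (F.dual i)).isLinear _) hq
    rintro _ ⟨j, rfl⟩
    rw [Set.mem_ofPred_eq, F.inner_dual_vertex]
    split_ifs <;> norm_num
  · intro hq
    have hbary : F.point (fun i => F.coord q i + 1 / 3) = q := F.ext_coord fun i => by
      rw [coord_point]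
      linarith [F.sum_coord q]
    rw [← hbary]
    refine (convex_convexHull ℝ _).sum_mem (fun i _ => by linarith [hq i]) ?_ fun i _ =>
      subset_convexHull ℝ _ ⟨i, rfl⟩
    rw [Fin.sum_univ_three]
    linarith [F.sum_coord q]

end DualFrame

lemma exists_dualFrame_vertex_eq {V : Fin 3 → E2} (hV : AffineIndependent ℝ V)
    (hsum : ∑ i, V i = 0) : ∃ F : DualFrame, F.vertex = V := by
  have hspan : affineSpan ℝ (Set.range V) = ⊤ :=
    hV.affineSpan_eq_top_iff_card_eq_finrank_add_one.2 (by simp)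
  let β : AffineBasis (Fin 3) ℝ E2 := ⟨V, hV, hspan⟩
  let dual (i : Fin 3) : E2 := (InnerProductSpace.toDual ℝ E2).symm
    (LinearMap.toContinuousLinearMap (β.coord i).linear)
  have hdual (i : Fin 3) (q : E2) : ⟪dual i, q⟫ = β.coord i q - β.coord i 0 :=
    InnerProductSpace.toDual_symm_apply.trans (congrFun (β.coord i).decomp' q)
  have hcentroid : Finset.univ.centroid ℝ β = 0 := by
    rw [Finset.centroid, Finset.affineCombination_eq_linear_combination _ _ _
      (Finset.univ.sum_centroidWeights_eq_one_of_nonempty ℝ Finset.univ_nonempty)]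
    simp only [Finset.centroidWeights_apply, ← Finset.smul_sum]
    exact smul_eq_zero_of_right _ hsum
  have hzero (i : Fin 3) : β.coord i 0 = 1 / 3 := by
    rw [← hcentroid, β.coord_apply_centroid (Finset.mem_univ i)]
    simp
  refine ⟨⟨V, dual, fun i j => ?_, fun q => ?_⟩, rfl⟩
  · have hβ := β.coord_apply i j
    rw [hdual, hzero, show V j = β j from rfl, hβ]
    split_ifs <;> norm_num
  · simp only [hdual, hzero, sub_smul, Finset.sum_sub_distrib, ← Finset.smul_sum, hsum, smul_zero,
      sub_zero]
    exact β.linear_combination_coord_eq_self q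

/-- A frame whose vertices are those of the triangle `K`. -/
structure TriangleFrame (K : Set E2) extends DualFrame where
  eq_convexHull : K = convexHull ℝ (Set.range vertex)

lemma exists_triangleFrame {A B C : E2} (hABC : AffineIndependent ℝ ![A, B, C])
    (hcent : A + B + C = 0) {K : Set E2} (hK : K = convexHull ℝ {A, B, C}) :
    Nonempty (TriangleFrame K) := by
  obtain ⟨F, hF⟩ := exists_dualFrame_vertex_eq hABC (by simpa [Fin.sum_univ_three] using hcent)
  have hrange : Set.range ![A, B, C] = {A, B, C} := by
    rw [Matrix.range_cons, Matrix.range_cons_cons_empty, Set.singleton_union]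
  exact ⟨F, by rw [hF, hrange, hK]⟩

namespace TriangleFrame

variable {K : Set E2} (F : TriangleFrame K)

lemma polarBody_eq : polarBody K = polarBody (Set.range F.vertex) :=
  (congrArg polarBody F.eq_convexHull).trans (polarBody_convexHull _)

lemma mem_polarBody_iff {p : E2} : p ∈ polarBody K ↔ ∀ i, F.symm.coord p i ≤ 1 := by
  rw [F.polarBody_eq, mem_polarBody, Set.forall_mem_range]
  rfl

lemma mem_iff {q : E2} : q ∈ K ↔ ∀ i, -1 / 3 ≤ F.coord q i :=
  (Set.ext_iff.1 F.eq_convexHull q).trans F.mem_convexHull_range_vertex_iff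

lemma mem_hexagon_iff {q : E2} : q ∈ K - K ↔ ∀ i, |F.coord q i| ≤ 1 := by
  constructor
  · rintro ⟨u, hu, v, hv, rfl⟩ i
    have hbound : ∀ x ∈ K, -1 / 3 ≤ F.coord x i ∧ F.coord x i ≤ 2 / 3 := fun x hx => by
      have hx := F.mem_iff.1 hx
      refine ⟨hx i, ?_⟩
      fin_cases i <;> dsimp only [Fin.zero_eta, Fin.mk_one, Fin.reduceFinMk] <;>
        linarith [hx 0, hx 1, hx 2, F.sum_coord x]
    rw [F.coord_sub, abs_le]
    constructor <;> linarith [hbound u hu, hbound v hv]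
  · intro hq
    have hsum := F.sum_coord q
    -- The positive and the negative parts of the coordinates of `q` are, up to a common constant,
    -- the barycentric coordinates of two points of `K` with difference `q`.
    have hpart : (F.coord q 0)⁺ + (F.coord q 1)⁺ + (F.coord q 2)⁺ =
        (F.coord q 0)⁻ + (F.coord q 1)⁻ + (F.coord q 2)⁻ := by
      linarith [posPart_sub_negPart (F.coord q 0), posPart_sub_negPart (F.coord q 1),
        posPart_sub_negPart (F.coord q 2)]
    have hle : (F.coord q 0)⁺ + (F.coord q 1)⁺ + (F.coord q 2)⁺ ≤ 1 := by
      simp only [abs_le] at hq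
      simp only [posPart_def]
      rcases max_cases (F.coord q 0) 0 with h0 | h0 <;>
      rcases max_cases (F.coord q 1) 0 with h1 | h1 <;>
      rcases max_cases (F.coord q 2) 0 with h2 | h2 <;>
      linarith [hq 0, hq 1, hq 2]
    refine ⟨F.point fun i => (F.coord q i)⁺, ?_, F.point fun i => (F.coord q i)⁻, ?_, ?_⟩
    · refine F.mem_iff.2 fun i => ?_
      rw [F.coord_point]
      linarith [posPart_nonneg (F.coord q i)]
    · refine F.mem_iff.2 fun i => ?_
      rw [F.coord_point]
      linarith [negPart_nonneg (F.coord q i)]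
    · refine F.ext_coord fun i => ?_
      simp only [F.coord_sub, F.coord_point]
      linarith [posPart_sub_negPart (F.coord q i)]

lemma hexagon_eq_polarBody :
    K - K = polarBody (Set.range F.dual ∪ Set.range fun i => -F.dual i) := by
  ext q
  simp only [F.mem_hexagon_iff, mem_polarBody, Set.mem_union, or_imp, forall_and,
    Set.forall_mem_range, inner_neg_left, abs_le', DualFrame.coord]

lemma hasOuterNormal_polarBody_iff {p u : E2} :
    HasOuterNormal (polarBody K) p u ↔
      ∃ j, u = F.vertex j ∧ F.symm.coord p j = 1 ∧ ∀ l ≠ j, F.symm.coord p l < 1 := by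
  rw [F.polarBody_eq, Billiard2.hasOuterNormal_polarBody_iff (Set.finite_range _)]
  constructor
  · rintro ⟨⟨j, rfl⟩, hj, hlt⟩
    exact ⟨j, rfl, hj, fun l hl => hlt _ ⟨l, rfl⟩ (F.vertex_injective.ne hl)⟩
  · rintro ⟨j, rfl, hj, hlt⟩
    refine ⟨⟨j, rfl⟩, hj, ?_⟩
    rintro _ ⟨l, rfl⟩ hl
    exact hlt l fun h => hl (congrArg _ h)

lemma hasOuterNormal_hexagon_iff {q u : E2} :
    HasOuterNormal (K - K) q u ↔ ∃ i, (u = F.dual i ∧ F.coord q i = 1 ∨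
      u = -F.dual i ∧ F.coord q i = -1) ∧ ∀ l ≠ i, |F.coord q l| < 1 := by
  have dual_inj : ∀ {i j}, F.dual i = F.dual j ↔ i = j := F.symm.vertex_injective.eq_iff
  have dual_ne_neg : ∀ i j, F.dual i ≠ -F.dual j := F.symm.vertex_ne_neg_vertex
  rw [F.hexagon_eq_polarBody, Billiard2.hasOuterNormal_polarBody_iff
    ((Set.finite_range _).union (Set.finite_range _))]
  simp only [Set.mem_union, or_imp, forall_and, Set.forall_mem_range, inner_neg_left]
  constructor
  · rintro ⟨⟨i, rfl⟩ | ⟨i, rfl⟩, hi, hpos, hneg⟩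
    · refine ⟨i, .inl ⟨rfl, hi⟩, fun l hl => abs_lt.2 ⟨neg_lt.1 ?_, ?_⟩⟩
      · exact hneg l (dual_ne_neg i l).symm
      · exact hpos l (dual_inj.not.2 hl)
    · rw [inner_neg_left, neg_eq_iff_eq_neg] at hi
      refine ⟨i, .inr ⟨rfl, hi⟩, fun l hl => abs_lt.2 ⟨neg_lt.1 ?_, ?_⟩⟩
      · exact hneg l (neg_injective.ne (dual_inj.not.2 hl))
      · exact hpos l (dual_ne_neg l i)
  · rintro ⟨i, ⟨rfl, hi⟩ | ⟨rfl, hi⟩, hlt⟩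
    · refine ⟨.inl ⟨i, rfl⟩, hi, fun l hl => (abs_lt.1 (hlt l (mt dual_inj.2 hl))).2, fun l _ => ?_⟩
      rcases eq_or_ne l i with rfl | hl
      · exact (neg_lt_zero.2 (one_pos.trans_eq hi.symm)).trans one_pos
      · exact neg_lt.1 (abs_lt.1 (hlt l hl)).1
    · refine ⟨.inr ⟨i, rfl⟩, by rw [inner_neg_left, neg_eq_iff_eq_neg]; exact hi, fun l _ => ?_,
        fun l hl => neg_lt.1 (abs_lt.1 (hlt l fun h => hl (h ▸ rfl))).1⟩
      rcases eq_or_ne l i with rfl | hl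
      · exact (hi.trans_lt neg_one_lt_zero).trans one_pos
      · exact (abs_lt.1 (hlt l hl)).2

lemma mem_frontier_polarBody_iff {p : E2} :
    p ∈ frontier (polarBody K) ↔ p ∈ polarBody K ∧ ∃ i, F.symm.coord p i = 1 := by
  simp only [F.polarBody_eq, Billiard2.mem_frontier_polarBody_iff (Set.finite_range _),
    Set.exists_range_iff]
  rfl

lemma mem_frontier_hexagon_iff {q : E2} :
    q ∈ frontier (K - K) ↔ q ∈ K - K ∧ ∃ i, F.coord q i = 1 ∨ F.coord q i = -1 := by
  rw [F.hexagon_eq_polarBody, Billiard2.mem_frontier_polarBody_iff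
    ((Set.finite_range _).union (Set.finite_range _))]
  simp only [Set.mem_union, or_and_right, exists_or, Set.exists_range_iff, inner_neg_left,
    neg_eq_iff_eq_neg]
  rfl

end TriangleFrame
/-! ### The billiard map on phase space -/

section Billiard

variable {H T : Set E2}

/-- The phase of a trajectory: its position together with its momentum. -/
def ClassicalTraj.phase (τ : ClassicalTraj H T) (n : ℕ) : E2 × E2 := (τ.q n, τ.p n)

/-- One bounce of the billiard as a relation between consecutive phases: first the momentum is
reflected, then the position moves along the normal at the new momentum. -/
structure BilliardStep (H T : Set E2) (z z' : E2 × E2) : Prop where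
  exists_normal_momentum : ∃ v, HasOuterNormal T z.2 v
  reflection : ∃ u, HasOuterNormal H z.1 u ∧ ∃ s : ℝ, 0 < s ∧ z'.2 - z.2 = -s • u
  motion : ∃ v, HasOuterNormal T z'.2 v ∧ ∃ t : ℝ, 0 < t ∧ z'.1 - z.1 = t • v
  exists_normal_position : ∃ u, HasOuterNormal H z'.1 u

namespace ClassicalTraj

variable (τ : ClassicalTraj H T)

lemma billiardStep (n : ℕ) : BilliardStep H T (τ.phase n) (τ.phase (n + 1)) where
  exists_normal_momentum := ⟨τ.np n, τ.p_mem n, τ.np_spec n⟩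
  reflection := ⟨τ.nq n, ⟨τ.q_mem n, τ.nq_spec n⟩, τ.lam n, τ.lam_pos n, τ.reflection n⟩
  motion := ⟨τ.np (n + 1), ⟨τ.p_mem _, τ.np_spec _⟩, τ.mu n, τ.mu_pos n, τ.motion n⟩
  exists_normal_position := ⟨τ.nq (n + 1), τ.q_mem _, τ.nq_spec _⟩

lemma phase_add_m (n : ℕ) : τ.phase (n + τ.m) = τ.phase n :=
  Prod.ext (τ.q_periodic n) (τ.p_periodic n)

lemma isSimple_iff_phase :
    τ.IsSimple ↔ ∀ d, 0 < d → d < τ.m → ¬∀ n, τ.phase (n + d) = τ.phase n := by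
  simp only [IsSimple, phase, Prod.ext_iff]

end ClassicalTraj

lemma exists_traj_of_cycle {m : ℕ} [NeZero m] {z : ZMod m → E2 × E2}
    (hz : ∀ i, BilliardStep H T (z i) (z (i + 1))) :
    ∃ τ : ClassicalTraj H T, τ.m = m ∧ ∀ n : ℕ, τ.phase n = z n := by
  choose u hu s hs hreflection using fun i => (hz i).reflection
  choose v hv t ht hmotion using fun i => (hz i).motion
  have hv_pred (i : ZMod m) : HasOuterNormal T (z i).2 (v (i - 1)) := by
    simpa only [sub_add_cancel] using hv (i - 1)
  refine ⟨{
    m := m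
    m_pos := Nat.pos_of_neZero m
    q := fun n => (z n).1
    p := fun n => (z n).2
    nq := fun n => u n
    np := fun n => v (n - 1)
    lam := fun n => s n
    mu := fun n => t n
    q_mem := fun n => (hu n).1
    p_mem := fun n => (hv_pred n).1
    q_periodic := fun n => by simp
    p_periodic := fun n => by simp
    nq_spec := fun n => (hu n).2
    np_spec := fun n => (hv_pred n).2
    lam_pos := fun n => hs n
    mu_pos := fun n => ht n
    reflection := fun n => by simpa using hreflection n
    motion := fun n => by simpa using hmotion n }, rfl, fun n => rfl⟩

end Billiard

/-! ### Phases of the hexagon billiard -/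

namespace TriangleFrame

variable {K : Set E2} (F : TriangleFrame K)

/-- Relabelling of the vertices. -/
def reindex (σ : Equiv.Perm (Fin 3)) : TriangleFrame K where
  __ := F.toDualFrame.reindex σ
  eq_convexHull := by
    have hrange : Set.range (F.toDualFrame.reindex σ).vertex = Set.range F.vertex :=
      σ.surjective.range_comp F.vertex
    rw [hrange, ← F.eq_convexHull]

/-- The frame with the vertices `0` and `2` exchanged. -/
def swap : TriangleFrame K := F.reindex (Equiv.swap 0 2)

lemma swap_swap : F.swap.swap = F := by
  obtain ⟨F, h⟩ := F
  obtain ⟨v, d, h1, h2⟩ := F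
  simp [swap, reindex, DualFrame.reindex]

/-- The phases with position on the edge with outer normal `dual 0` and momentum on the edge with
outer normal `vertex 0`. -/
noncomputable def posPhase (b y : ℝ) : E2 × E2 :=
  (F.point ![1, -b, b - 1], F.symm.point ![1, y, -1 - y])

/-- The phases with position on the edge with outer normal `-dual 2` and momentum on the edge with
outer normal `vertex 1`, parametrized so that the billiard maps `posPhase b y` to `negPhase b y`. -/
noncomputable def negPhase (b y : ℝ) : E2 × E2 :=
  (F.point ![1 - b, b, -1], F.symm.point ![2 * y - 1, 1, -2 * y])

section Coordinates

variable (b y : ℝ) (i : Fin 3)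

lemma coord_posPhase_fst : F.coord (F.posPhase b y).1 i = ![1, -b, b - 1] i := by
  simp [posPhase, F.coord_point]
  ring

lemma coord_posPhase_snd : F.symm.coord (F.posPhase b y).2 i = ![1, y, -1 - y] i := by
  simp [posPhase, F.symm.coord_point]

lemma coord_negPhase_fst : F.coord (F.negPhase b y).1 i = ![1 - b, b, -1] i := by
  simp [negPhase, F.coord_point]

lemma coord_negPhase_snd : F.symm.coord (F.negPhase b y).2 i = ![2 * y - 1, 1, -2 * y] i := by
  simp [negPhase, F.symm.coord_point]

lemma coord_swap_posPhase_fst : F.coord (F.swap.posPhase b y).1 i = ![b - 1, -b, 1] i := by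
  have h := F.swap.coord_posPhase_fst b y (Equiv.swap 0 2 i)
  fin_cases i <;> exact h

lemma coord_swap_posPhase_snd :
    F.symm.coord (F.swap.posPhase b y).2 i = ![-1 - y, y, 1] i := by
  have h := F.swap.coord_posPhase_snd b y (Equiv.swap 0 2 i)
  fin_cases i <;> exact h

end Coordinates

section Bounce

variable {b y s t : ℝ} {p q u v : E2}

lemma eq_of_reflection_posPhase (hy : -1 / 2 < y) (hs : 0 < s)
    (hp : p - (F.posPhase b y).2 = -s • F.dual 0) (hv : HasOuterNormal (polarBody K) p v) :
    p = (F.negPhase b y).2 ∧ v = F.vertex 1 := by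
  have hcoord := F.symm.sub_eq_smul_vertex_iff.1 hp
  have h0 : F.symm.coord p 0 = 1 - s * (2 / 3) := by simp [hcoord, coord_posPhase_snd]; ring
  have h1 : F.symm.coord p 1 = y + s / 3 := by simp [hcoord, coord_posPhase_snd]; ring
  have h2 : F.symm.coord p 2 = -1 - y + s / 3 := by simp [hcoord, coord_posPhase_snd]; ring
  obtain ⟨j, rfl, hj, hlt⟩ := F.hasOuterNormal_polarBody_iff.1 hv
  obtain rfl | rfl | rfl : j = 0 ∨ j = 1 ∨ j = 2 := by lia
  · linarith
  · refine ⟨F.symm.ext_coord fun i => ?_, rfl⟩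
    rw [coord_negPhase_snd]
    fin_cases i <;> simp <;> linarith
  · linarith [hlt 1 (by decide)]

lemma eq_of_reflection_negPhase (hy : y ∈ Set.Ioo (-1 / 2 : ℝ) 1) (hs : 0 < s)
    (hp : p - (F.negPhase b y).2 = -s • -F.dual 2) (hv : HasOuterNormal (polarBody K) p v) :
    p = (F.swap.posPhase (1 - b) (1 / 2 - y)).2 ∧ v = F.vertex 2 := by
  obtain ⟨hy0, hy1⟩ := hy
  rw [neg_smul_neg] at hp
  have hcoord := F.symm.sub_eq_smul_vertex_iff.1 hp
  have h0 : F.symm.coord p 0 = 2 * y - 1 - s / 3 := by simp [hcoord, coord_negPhase_snd]; ring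
  have h1 : F.symm.coord p 1 = 1 - s / 3 := by simp [hcoord, coord_negPhase_snd]; ring
  have h2 : F.symm.coord p 2 = -2 * y + s * (2 / 3) := by simp [hcoord, coord_negPhase_snd]
  obtain ⟨j, rfl, hj, hlt⟩ := F.hasOuterNormal_polarBody_iff.1 hv
  obtain rfl | rfl | rfl : j = 0 ∨ j = 1 ∨ j = 2 := by lia
  · linarith
  · linarith
  · refine ⟨F.symm.ext_coord fun i => ?_, rfl⟩
    rw [coord_swap_posPhase_snd]
    fin_cases i <;> simp <;> linarith

lemma eq_of_motion_posPhase (hb : b ∈ Set.Ioo (0 : ℝ) 1) (ht : 0 < t)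
    (hq : q - (F.posPhase b y).1 = t • F.vertex 1) (hu : HasOuterNormal (K - K) q u) :
    q = (F.negPhase b y).1 := by
  obtain ⟨hb0, hb1⟩ := hb
  have hcoord := F.sub_eq_smul_vertex_iff.1 hq
  have h0 : F.coord q 0 = 1 - t / 3 := by simp [hcoord, coord_posPhase_fst]; ring
  have h1 : F.coord q 1 = -b + t * (2 / 3) := by simp [hcoord, coord_posPhase_fst]
  have h2 : F.coord q 2 = b - 1 - t / 3 := by simp [hcoord, coord_posPhase_fst]; ring
  obtain ⟨j, hj, hlt⟩ := F.hasOuterNormal_hexagon_iff.1 hu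
  obtain rfl | rfl | rfl : j = 0 ∨ j = 1 ∨ j = 2 := by lia
  · rcases hj with ⟨-, hj⟩ | ⟨-, hj⟩ <;> linarith [abs_lt.1 (hlt 1 (by decide))]
  · rcases hj with ⟨-, hj⟩ | ⟨-, hj⟩ <;> linarith [abs_lt.1 (hlt 2 (by decide))]
  · rcases hj with ⟨-, hj⟩ | ⟨-, hj⟩
    · linarith
    · refine F.ext_coord fun i => ?_
      rw [coord_negPhase_fst]
      fin_cases i <;> simp <;> linarith

lemma eq_of_motion_negPhase (hb : b ∈ Set.Ioo (0 : ℝ) 1) (ht : 0 < t)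
    (hq : q - (F.negPhase b y).1 = t • F.vertex 2) (hu : HasOuterNormal (K - K) q u) :
    q = (F.swap.posPhase (1 - b) (1 / 2 - y)).1 := by
  obtain ⟨hb0, hb1⟩ := hb
  have hcoord := F.sub_eq_smul_vertex_iff.1 hq
  have h0 : F.coord q 0 = 1 - b - t / 3 := by simp [hcoord, coord_negPhase_fst]; ring
  have h1 : F.coord q 1 = b - t / 3 := by simp [hcoord, coord_negPhase_fst]; ring
  have h2 : F.coord q 2 = -1 + t * (2 / 3) := by simp [hcoord, coord_negPhase_fst]
  obtain ⟨j, hj, hlt⟩ := F.hasOuterNormal_hexagon_iff.1 hu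
  obtain rfl | rfl | rfl : j = 0 ∨ j = 1 ∨ j = 2 := by lia
  · rcases hj with ⟨-, hj⟩ | ⟨-, hj⟩ <;> linarith [abs_lt.1 (hlt 2 (by decide))]
  · rcases hj with ⟨-, hj⟩ | ⟨-, hj⟩ <;> linarith [abs_lt.1 (hlt 2 (by decide))]
  · rcases hj with ⟨-, hj⟩ | ⟨-, hj⟩
    · refine F.ext_coord fun i => ?_
      rw [coord_swap_posPhase_fst]
      fin_cases i <;> simp <;> linarith
    · linarith

end Bounce

section Step

variable {b y : ℝ} {z : E2 × E2}

lemma hasOuterNormal_posPhase_fst (hb : b ∈ Set.Ioo (0 : ℝ) 1) :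
    HasOuterNormal (K - K) (F.posPhase b y).1 (F.dual 0) := by
  refine F.hasOuterNormal_hexagon_iff.2
    ⟨0, .inl ⟨rfl, F.coord_posPhase_fst b y 0⟩, fun l hl => ?_⟩
  rw [coord_posPhase_fst, abs_lt]
  obtain rfl | rfl : l = 1 ∨ l = 2 := by lia
  all_goals constructor <;> simp <;> linarith [hb.1, hb.2]

lemma hasOuterNormal_posPhase_snd (hy : y ∈ Set.Ioo (-1 / 2 : ℝ) 1) :
    HasOuterNormal (polarBody K) (F.posPhase b y).2 (F.vertex 0) := by
  refine F.hasOuterNormal_polarBody_iff.2 ⟨0, rfl, F.coord_posPhase_snd b y 0, fun l hl => ?_⟩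
  rw [coord_posPhase_snd]
  obtain rfl | rfl : l = 1 ∨ l = 2 := by lia
  all_goals
    simp
    linarith [hy.1, hy.2]

lemma hasOuterNormal_negPhase_fst (hb : b ∈ Set.Ioo (0 : ℝ) 1) :
    HasOuterNormal (K - K) (F.negPhase b y).1 (-F.dual 2) := by
  refine F.hasOuterNormal_hexagon_iff.2
    ⟨2, .inr ⟨rfl, F.coord_negPhase_fst b y 2⟩, fun l hl => ?_⟩
  rw [coord_negPhase_fst, abs_lt]
  obtain rfl | rfl : l = 0 ∨ l = 1 := by lia
  all_goals constructor <;> simp <;> linarith [hb.1, hb.2]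

lemma hasOuterNormal_negPhase_snd (hy : y ∈ Set.Ioo (-1 / 2 : ℝ) 1) :
    HasOuterNormal (polarBody K) (F.negPhase b y).2 (F.vertex 1) := by
  refine F.hasOuterNormal_polarBody_iff.2 ⟨1, rfl, F.coord_negPhase_snd b y 1, fun l hl => ?_⟩
  rw [coord_negPhase_snd]
  obtain rfl | rfl : l = 0 ∨ l = 2 := by lia
  all_goals
    simp
    linarith [hy.1, hy.2]

lemma negPhase_fst_sub_posPhase_fst (b y : ℝ) :
    (F.negPhase b y).1 - (F.posPhase b y).1 = (3 * b) • F.vertex 1 := by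
  refine F.sub_eq_smul_vertex_iff.2 fun i => ?_
  rw [coord_negPhase_fst, coord_posPhase_fst]
  fin_cases i <;> simp <;> ring

lemma negPhase_snd_sub_posPhase_snd (b y : ℝ) :
    (F.negPhase b y).2 - (F.posPhase b y).2 = -(3 * (1 - y)) • F.dual 0 := by
  refine F.symm.sub_eq_smul_vertex_iff.2 fun i => ?_
  rw [coord_negPhase_snd, coord_posPhase_snd]
  fin_cases i <;> simp <;> ring

lemma swap_posPhase_fst_sub_negPhase_fst (b y : ℝ) :
    (F.swap.posPhase (1 - b) (1 / 2 - y)).1 - (F.negPhase b y).1 = (3 : ℝ) • F.vertex 2 := by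
  refine F.sub_eq_smul_vertex_iff.2 fun i => ?_
  rw [coord_swap_posPhase_fst, coord_negPhase_fst]
  fin_cases i <;> simp <;> ring

lemma swap_posPhase_snd_sub_negPhase_snd (b y : ℝ) :
    (F.swap.posPhase (1 - b) (1 / 2 - y)).2 - (F.negPhase b y).2 =
      -(3 * (1 / 2 + y)) • -F.dual 2 := by
  rw [neg_smul_neg]
  refine F.symm.sub_eq_smul_vertex_iff.2 fun i => ?_
  rw [coord_swap_posPhase_snd, coord_negPhase_snd]
  fin_cases i <;> simp <;> ring

lemma billiardStep_posPhase_iff (hb : b ∈ Set.Ioo (0 : ℝ) 1) (hy : y ∈ Set.Ioo (-1 / 2 : ℝ) 1) :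
    BilliardStep (K - K) (polarBody K) (F.posPhase b y) z ↔ z = F.negPhase b y := by
  constructor
  · rintro ⟨-, ⟨u, hu, s, hs, hp⟩, ⟨v, hv, t, ht, hq⟩, u', hu'⟩
    obtain rfl := hu.unique (F.hasOuterNormal_posPhase_fst hb)
    obtain ⟨hz, rfl⟩ := F.eq_of_reflection_posPhase hy.1 hs hp hv
    exact Prod.ext (F.eq_of_motion_posPhase hb ht hq hu') hz
  · rintro rfl
    exact
      { exists_normal_momentum := ⟨_, F.hasOuterNormal_posPhase_snd hy⟩
        reflection := ⟨_, F.hasOuterNormal_posPhase_fst hb, 3 * (1 - y), by linarith [hy.2],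
          F.negPhase_snd_sub_posPhase_snd b y⟩
        motion := ⟨_, F.hasOuterNormal_negPhase_snd hy, 3 * b, by linarith [hb.1],
          F.negPhase_fst_sub_posPhase_fst b y⟩
        exists_normal_position := ⟨_, F.hasOuterNormal_negPhase_fst hb⟩ }

lemma one_sub_mem_Ioo (hb : b ∈ Set.Ioo (0 : ℝ) 1) : 1 - b ∈ Set.Ioo (0 : ℝ) 1 := by
  constructor <;> linarith [hb.1, hb.2]

lemma half_sub_mem_Ioo (hy : y ∈ Set.Ioo (-1 / 2 : ℝ) 1) :
    1 / 2 - y ∈ Set.Ioo (-1 / 2 : ℝ) 1 := by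
  constructor <;> linarith [hy.1, hy.2]

lemma billiardStep_negPhase_iff (hb : b ∈ Set.Ioo (0 : ℝ) 1) (hy : y ∈ Set.Ioo (-1 / 2 : ℝ) 1) :
    BilliardStep (K - K) (polarBody K) (F.negPhase b y) z ↔
      z = F.swap.posPhase (1 - b) (1 / 2 - y) := by
  constructor
  · rintro ⟨-, ⟨u, hu, s, hs, hp⟩, ⟨v, hv, t, ht, hq⟩, u', hu'⟩
    obtain rfl := hu.unique (F.hasOuterNormal_negPhase_fst hb)
    obtain ⟨hz, rfl⟩ := F.eq_of_reflection_negPhase hy hs hp hv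
    exact Prod.ext (F.eq_of_motion_negPhase hb ht hq hu') hz
  · rintro rfl
    exact
      { exists_normal_momentum := ⟨_, F.hasOuterNormal_negPhase_snd hy⟩
        reflection := ⟨_, F.hasOuterNormal_negPhase_fst hb, 3 * (1 / 2 + y), by linarith [hy.1],
          F.swap_posPhase_snd_sub_negPhase_snd b y⟩
        motion := ⟨_, F.swap.hasOuterNormal_posPhase_snd (half_sub_mem_Ioo hy), 3, by norm_num,
          F.swap_posPhase_fst_sub_negPhase_fst b y⟩
        exists_normal_position := ⟨_, F.swap.hasOuterNormal_posPhase_fst (one_sub_mem_Ioo hb)⟩ }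

end Step

end TriangleFrame

/-! ### Periodicity and length -/

namespace TriangleFrame

variable {K : Set E2} (F : TriangleFrame K) {b y : ℝ} {z z' : E2 × E2}

lemma eq_dual_of_coord_eq_one {q u : E2} {i : Fin 3} (hu : HasOuterNormal (K - K) q u)
    (hi : F.coord q i = 1) : u = F.dual i ∧ ∀ l ≠ i, |F.coord q l| < 1 := by
  obtain ⟨j, hj, hlt⟩ := F.hasOuterNormal_hexagon_iff.1 hu
  obtain rfl : i = j := by
    by_contra hne
    exact (hlt i hne).ne (by rw [hi, abs_one])
  rcases hj with ⟨rfl, -⟩ | ⟨-, hj⟩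
  · exact ⟨rfl, hlt⟩
  · linarith

lemma eq_neg_dual_of_coord_eq_neg_one {q u : E2} {i : Fin 3} (hu : HasOuterNormal (K - K) q u)
    (hi : F.coord q i = -1) : u = -F.dual i ∧ ∀ l ≠ i, |F.coord q l| < 1 := by
  obtain ⟨j, hj, hlt⟩ := F.hasOuterNormal_hexagon_iff.1 hu
  obtain rfl : i = j := by
    by_contra hne
    exact (hlt i hne).ne (by rw [hi, abs_neg, abs_one])
  rcases hj with ⟨-, hj⟩ | ⟨rfl, -⟩
  · linarith
  · exact ⟨rfl, hlt⟩

lemma coord_le_one_of_hasOuterNormal {p v : E2} (hv : HasOuterNormal (polarBody K) p v)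
    (i : Fin 3) : F.symm.coord p i ≤ 1 :=
  F.mem_polarBody_iff.1 ((isClosed_polarBody K).frontier_subset hv.1) i

lemma coord_of_reflection_dual {p p' v v' : E2} {s : ℝ} (hv : HasOuterNormal (polarBody K) p v)
    (hv' : HasOuterNormal (polarBody K) p' v') (hs : 0 < s) (hrefl : p' - p = -s • F.dual 0)
    (hp : F.symm.coord p 2 ≤ F.symm.coord p 1) :
    F.symm.coord p 0 = 1 ∧ F.symm.coord p 1 ∈ Set.Ioo (-1 / 2 : ℝ) 1 := by
  have hcoord := F.symm.sub_eq_smul_vertex_iff.1 hrefl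
  have h0 : F.symm.coord p' 0 = F.symm.coord p 0 - s * (2 / 3) := by simp [hcoord]; ring
  have h1 : F.symm.coord p' 1 = F.symm.coord p 1 + s / 3 := by simp [hcoord]; ring
  have h2 : F.symm.coord p' 2 = F.symm.coord p 2 + s / 3 := by simp [hcoord]; ring
  have hle := F.coord_le_one_of_hasOuterNormal hv'
  obtain ⟨j, -, hj, hlt⟩ := F.hasOuterNormal_polarBody_iff.1 hv
  obtain ⟨k, -, hk, hlt'⟩ := F.hasOuterNormal_polarBody_iff.1 hv'
  obtain rfl | rfl | rfl : j = 0 ∨ j = 1 ∨ j = 2 := by lia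
  · have hne : F.symm.coord p 2 ≠ F.symm.coord p 1 := fun heq => by
      obtain rfl | rfl | rfl : k = 0 ∨ k = 1 ∨ k = 2 := by lia
      · linarith
      · linarith [hlt' 2 (by decide)]
      · linarith [hlt' 1 (by decide)]
    exact ⟨hj, by linarith [F.symm.sum_coord p, hp.lt_of_ne hne], hlt 1 (by decide)⟩
  · linarith [hle 1]
  · linarith [hle 2]

lemma coord_of_reflection_neg_dual {p p' v v' : E2} {s : ℝ}
    (hv : HasOuterNormal (polarBody K) p v) (hv' : HasOuterNormal (polarBody K) p' v') (hs : 0 < s)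
    (hrefl : p' - p = -s • -F.dual 2) (hp : F.symm.coord p 0 ≤ F.symm.coord p 1) :
    F.symm.coord p 1 = 1 ∧ F.symm.coord p 0 ∈ Set.Ioo (-2 : ℝ) 1 := by
  rw [neg_smul_neg] at hrefl
  have h2 : F.symm.coord p' 2 = F.symm.coord p 2 + s * (2 / 3) := by
    simp [F.symm.sub_eq_smul_vertex_iff.1 hrefl]
  obtain ⟨j, -, hj, hlt⟩ := F.hasOuterNormal_polarBody_iff.1 hv
  obtain rfl | rfl | rfl : j = 0 ∨ j = 1 ∨ j = 2 := by lia
  · linarith [hlt 1 (by decide)]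
  · exact ⟨hj, by linarith [F.symm.sum_coord p, hlt 2 (by decide)], hlt 0 (by decide)⟩
  · linarith [F.coord_le_one_of_hasOuterNormal hv' 2]

lemma exists_eq_posPhase (h : BilliardStep (K - K) (polarBody K) z z') (hq : F.coord z.1 0 = 1)
    (hp : F.symm.coord z.2 2 ≤ F.symm.coord z.2 1) :
    ∃ b ∈ Set.Ioo (0 : ℝ) 1, ∃ y ∈ Set.Ioo (-1 / 2 : ℝ) 1, z = F.posPhase b y := by
  obtain ⟨⟨v, hv⟩, ⟨u, hu, s, hs, hrefl⟩, ⟨v', hv', -⟩, -⟩ := h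
  obtain ⟨rfl, hlt⟩ := F.eq_dual_of_coord_eq_one hu hq
  obtain ⟨hp0, hp1⟩ := F.coord_of_reflection_dual hv hv' hs hrefl hp
  have hq1 := abs_lt.1 (hlt 1 (by decide))
  have hq2 := abs_lt.1 (hlt 2 (by decide))
  have hqsum := F.sum_coord z.1
  have hpsum := F.symm.sum_coord z.2
  refine ⟨-F.coord z.1 1, ⟨by linarith, by linarith⟩, F.symm.coord z.2 1, hp1,
    Prod.ext (F.ext_coord fun i => ?_) (F.symm.ext_coord fun i => ?_)⟩
  · rw [coord_posPhase_fst]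
    fin_cases i <;> simp <;> linarith
  · rw [coord_posPhase_snd]
    fin_cases i <;> simp <;> linarith

lemma exists_eq_negPhase (h : BilliardStep (K - K) (polarBody K) z z') (hq : F.coord z.1 2 = -1)
    (hp : F.symm.coord z.2 0 ≤ F.symm.coord z.2 1) :
    ∃ b ∈ Set.Ioo (0 : ℝ) 1, ∃ y ∈ Set.Ioo (-1 / 2 : ℝ) 1, z = F.negPhase b y := by
  obtain ⟨⟨v, hv⟩, ⟨u, hu, s, hs, hrefl⟩, ⟨v', hv', -⟩, -⟩ := h
  obtain ⟨rfl, hlt⟩ := F.eq_neg_dual_of_coord_eq_neg_one hu hq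
  obtain ⟨hp1, hp0⟩ := F.coord_of_reflection_neg_dual hv hv' hs hrefl hp
  have hq0 := abs_lt.1 (hlt 0 (by decide))
  have hq1 := abs_lt.1 (hlt 1 (by decide))
  have hqsum := F.sum_coord z.1
  have hpsum := F.symm.sum_coord z.2
  refine ⟨F.coord z.1 1, ⟨by linarith, by linarith⟩, (1 + F.symm.coord z.2 0) / 2,
    ⟨by linarith [hp0.1], by linarith [hp0.2]⟩,
    Prod.ext (F.ext_coord fun i => ?_) (F.symm.ext_coord fun i => ?_)⟩
  · rw [coord_negPhase_fst]
    fin_cases i <;> simp <;> linarith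
  · rw [coord_negPhase_snd]
    fin_cases i <;> simp <;> linarith

include F in
lemma exists_eq_posPhase_or_eq_negPhase (h : BilliardStep (K - K) (polarBody K) z z') :
    ∃ F' : TriangleFrame K, ∃ b ∈ Set.Ioo (0 : ℝ) 1, ∃ y ∈ Set.Ioo (-1 / 2 : ℝ) 1,
      z = F'.posPhase b y ∨ z = F'.negPhase b y := by
  obtain ⟨u, hu, -⟩ := h.reflection
  obtain ⟨i, ⟨-, hi⟩ | ⟨-, hi⟩, -⟩ := F.hasOuterNormal_hexagon_iff.1 hu
  · obtain ⟨σ, rfl, hσ⟩ := exists_perm_apply_le (a := 2) (b := 1) (c := 0) (by decide) (by decide) i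
      (F.symm.coord z.2)
    obtain ⟨b, hb, y, hy, hz⟩ := (F.reindex σ).exists_eq_posPhase h hi hσ
    exact ⟨F.reindex σ, b, hb, y, hy, .inl hz⟩
  · obtain ⟨σ, rfl, hσ⟩ := exists_perm_apply_le (a := 0) (b := 1) (c := 2) (by decide) (by decide) i
      (F.symm.coord z.2)
    obtain ⟨b, hb, y, hy, hz⟩ := (F.reindex σ).exists_eq_negPhase h hi hσ
    exact ⟨F.reindex σ, b, hb, y, hy, .inr hz⟩

/-- The periodic orbit of the billiard map through `posPhase b y`. -/
noncomputable def orbit (b y : ℝ) : ZMod 4 → E2 × E2 :=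
  ![F.posPhase b y, F.negPhase b y, F.swap.posPhase (1 - b) (1 / 2 - y),
    F.swap.negPhase (1 - b) (1 / 2 - y)]

lemma swap_swap_posPhase (b y : ℝ) :
    F.swap.swap.posPhase (1 - (1 - b)) (1 / 2 - (1 / 2 - y)) = F.posPhase b y := by
  rw [swap_swap, sub_sub_cancel, sub_sub_cancel]

lemma billiardStep_orbit_iff (hb : b ∈ Set.Ioo (0 : ℝ) 1) (hy : y ∈ Set.Ioo (-1 / 2 : ℝ) 1)
    (i : ZMod 4) :
    BilliardStep (K - K) (polarBody K) (F.orbit b y i) z ↔ z = F.orbit b y (i + 1) := by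
  have hb' := one_sub_mem_Ioo hb
  have hy' := half_sub_mem_Ioo hy
  fin_cases i
  · exact F.billiardStep_posPhase_iff hb hy
  · exact F.billiardStep_negPhase_iff hb hy
  · exact F.swap.billiardStep_posPhase_iff hb' hy'
  · exact (F.swap.billiardStep_negPhase_iff hb' hy').trans (by rw [swap_swap_posPhase]; rfl)

lemma coord_orbit_fst (b y : ℝ) (i : ZMod 4) :
    F.coord (F.orbit b y i).1 0 = ![1, 1 - b, -b, -1] i := by
  fin_cases i
  · exact F.coord_posPhase_fst b y 0
  · exact F.coord_negPhase_fst b y 0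
  · refine (F.coord_swap_posPhase_fst (1 - b) (1 / 2 - y) 0).trans ?_
    simp
  · exact F.swap.coord_negPhase_fst (1 - b) (1 / 2 - y) 2

lemma orbit_injective (hb : b ∈ Set.Ioo (0 : ℝ) 1) : Function.Injective (F.orbit b y) := by
  have hanti : StrictAnti (![1, 1 - b, -b, -1] : Fin 4 → ℝ) :=
    Fin.strictAnti_iff_succ_lt.2 fun i => by fin_cases i <;> simp <;> linarith [hb.1, hb.2]
  intro i j hij
  apply hanti.injective
  rw [← F.coord_orbit_fst b y i, ← F.coord_orbit_fst b y j, hij]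

include F in
lemma exists_phase_eq_orbit (τ : ClassicalTraj (K - K) (polarBody K)) :
    ∃ F' : TriangleFrame K, ∃ b ∈ Set.Ioo (0 : ℝ) 1, ∃ y ∈ Set.Ioo (-1 / 2 : ℝ) 1,
      ∃ i : ZMod 4, ∀ n : ℕ, τ.phase n = F'.orbit b y (i + n) := by
  obtain ⟨F', b, hb, y, hy, h0⟩ := F.exists_eq_posPhase_or_eq_negPhase (τ.billiardStep 0)
  obtain ⟨i, hi⟩ : ∃ i, τ.phase 0 = F'.orbit b y i := by
    rcases h0 with h0 | h0
    exacts [⟨0, h0⟩, ⟨1, h0⟩]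
  refine ⟨F', b, hb, y, hy, i, fun n => ?_⟩
  induction n with
  | zero => simpa using hi
  | succ n ih =>
    rw [Nat.cast_succ, ← add_assoc]
    exact (F'.billiardStep_orbit_iff hb hy (i + n)).1 (ih ▸ τ.billiardStep n)

include F in
lemma phase_periodic_iff (τ : ClassicalTraj (K - K) (polarBody K)) {d : ℕ} :
    (∀ n, τ.phase (n + d) = τ.phase n) ↔ 4 ∣ d := by
  obtain ⟨F', b, hb, y, -, i, hτ⟩ := F.exists_phase_eq_orbit τ
  simp only [hτ, (F'.orbit_injective hb).eq_iff, Nat.cast_add, add_right_inj, add_eq_left,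
    forall_const, ZMod.natCast_eq_zero_iff]

include F in
lemma isSimple_iff (τ : ClassicalTraj (K - K) (polarBody K)) : τ.IsSimple ↔ τ.m = 4 := by
  have hdvd : 4 ∣ τ.m := (F.phase_periodic_iff τ).1 τ.phase_add_m
  simp only [τ.isSimple_iff_phase, F.phase_periodic_iff τ]
  constructor
  · intro h
    by_contra hne
    exact h 4 four_pos ((Nat.le_of_dvd τ.m_pos hdvd).lt_of_ne' hne) dvd_rfl
  · intro hm d hd0 hdm hd
    exact (Nat.le_of_dvd hd0 hd).not_gt (hm ▸ hdm)

lemma sSup_inner_smul_vertex {μ : ℝ} (hμ : 0 ≤ μ) (j : Fin 3) :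
    sSup ((fun p => ⟪p, μ • F.vertex j⟫) '' polarBody K) = μ := by
  have hinner : ∀ p, ⟪p, μ • F.vertex j⟫ = μ * F.symm.coord p j := fun p => by
    rw [real_inner_smul_right, real_inner_comm]
    rfl
  have hcoord : ∀ i, F.symm.coord ((3 / 2 : ℝ) • F.dual j) i = if i = j then 1 else -1 / 2 :=
    fun i => by
      rw [F.symm.coord_smul, show F.symm.coord (F.dual j) i = _ from F.symm.coord_vertex i j]
      split_ifs <;> norm_num
  refine IsGreatest.csSup_eq ⟨⟨(3 / 2 : ℝ) • F.dual j, F.mem_polarBody_iff.2 fun i => ?_, ?_⟩, ?_⟩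
  · rw [hcoord]
    split_ifs <;> norm_num
  · simp only [hinner, hcoord, if_true, mul_one]
  · rintro _ ⟨p, hp, rfl⟩
    simpa only [hinner] using mul_le_of_le_one_right hμ (F.mem_polarBody_iff.1 hp j)

/-- The lengths of the four flights of the orbit `orbit b y`, in the norm of `polarBody K`. -/
def flightLength (b : ℝ) : ZMod 4 → ℝ := ![3 * b, 3, 3 * (1 - b), 3]

lemma exists_orbit_sub_orbit (b y : ℝ) (i : ZMod 4) : ∃ F' : TriangleFrame K, ∃ j,
    (F.orbit b y (i + 1)).1 - (F.orbit b y i).1 = flightLength b i • F'.vertex j := by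
  fin_cases i
  · exact ⟨F, 1, F.negPhase_fst_sub_posPhase_fst b y⟩
  · exact ⟨F, 2, F.swap_posPhase_fst_sub_negPhase_fst b y⟩
  · exact ⟨F.swap, 1, F.swap.negPhase_fst_sub_posPhase_fst (1 - b) (1 / 2 - y)⟩
  · have h := F.swap.swap_posPhase_fst_sub_negPhase_fst (1 - b) (1 / 2 - y)
    rw [swap_swap_posPhase] at h
    exact ⟨F.swap, 2, h⟩

lemma flightLength_nonneg (hb : b ∈ Set.Ioo (0 : ℝ) 1) (i : ZMod 4) : 0 ≤ flightLength b i := by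
  fin_cases i <;> simp [flightLength] <;> linarith [hb.1, hb.2]

lemma sum_flightLength (b : ℝ) (i : ZMod 4) :
    ∑ n ∈ Finset.range 4, flightLength b (i + n) = 9 := by
  have hshift : ∑ n ∈ Finset.range 4, flightLength b (i + n) = ∑ j : ZMod 4, flightLength b j := by
    rw [Finset.sum_range, ← Equiv.sum_comp (Equiv.addLeft i)]
    exact Fintype.sum_congr _ _ fun n => congrArg (fun k => flightLength b (i + k))
      (ZMod.natCast_zmod_val (n := 4) n)
  rw [hshift]
  refine (Fin.sum_univ_four (![3 * b, 3, 3 * (1 - b), 3] : Fin 4 → ℝ)).trans ?_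
  simp
  ring

lemma sSup_inner_orbit_sub_orbit (hb : b ∈ Set.Ioo (0 : ℝ) 1) (y : ℝ) (i : ZMod 4) :
    sSup ((fun p => ⟪p, (F.orbit b y (i + 1)).1 - (F.orbit b y i).1⟫) '' polarBody K) =
      flightLength b i := by
  obtain ⟨F', j, hj⟩ := F.exists_orbit_sub_orbit b y i
  rw [hj, F'.sSup_inner_smul_vertex (flightLength_nonneg hb i)]

include F in
lemma length_eq_nine {τ : ClassicalTraj (K - K) (polarBody K)} (hm : τ.m = 4) :
    τ.length = 9 := by
  obtain ⟨F', b, hb, y, -, i, hτ⟩ := F.exists_phase_eq_orbit τ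
  have hflight (n : ℕ) : sSup ((fun p => ⟪p, τ.q (n + 1) - τ.q n⟫) '' polarBody K) =
      flightLength b (i + n) := by
    have hq (k : ℕ) : τ.q k = (F'.orbit b y (i + k)).1 := congrArg Prod.fst (hτ k)
    rw [hq, hq, Nat.cast_succ, ← add_assoc, F'.sSup_inner_orbit_sub_orbit hb y]
  rw [ClassicalTraj.length, hm, Finset.sum_congr rfl fun n _ => hflight n, sum_flightLength]

end TriangleFrame

/-! ### Density of the shortest trajectories -/

/-- The union of the traces of the simple trajectories of length `9`. -/
def shortestTraces (K : Set E2) : Set (E2 × E2) :=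
  {w | ∃ τ : ClassicalTraj (K - K) (polarBody K), τ.IsSimple ∧ τ.length = 9 ∧ w ∈ τ.trace}

namespace ClassicalTraj

variable {H T : Set E2} (τ : ClassicalTraj H T) {n : ℕ}

lemma position_segment_subset_trace (hn : n < τ.m) :
    segment ℝ (τ.phase n).1 (τ.phase (n + 1)).1 ×ˢ {(τ.phase (n + 1)).2} ⊆ τ.trace := by
  rintro ⟨q, _⟩ ⟨hq, rfl⟩
  exact Set.mem_biUnion (Finset.mem_range.2 hn) (.inl ⟨q, hq, rfl⟩)

lemma momentum_segment_subset_trace (hn : n < τ.m) :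
    {(τ.phase n).1} ×ˢ segment ℝ (τ.phase n).2 (τ.phase (n + 1)).2 ⊆ τ.trace := by
  rintro ⟨_, p⟩ ⟨rfl, hp⟩
  exact Set.mem_biUnion (Finset.mem_range.2 hn) (.inr ⟨p, hp, rfl⟩)

end ClassicalTraj

namespace TriangleFrame

variable {K : Set E2} (F : TriangleFrame K) {b y : ℝ}

lemma exists_trajectory_through_orbit (hb : b ∈ Set.Ioo (0 : ℝ) 1)
    (hy : y ∈ Set.Ioo (-1 / 2 : ℝ) 1) (i : ZMod 4) :
    ∃ τ : ClassicalTraj (K - K) (polarBody K), τ.IsSimple ∧ τ.length = 9 ∧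
      ∃ n < τ.m, τ.phase n = F.orbit b y i ∧ τ.phase (n + 1) = F.orbit b y (i + 1) := by
  obtain ⟨τ, hm, hτ⟩ := exists_traj_of_cycle fun i => (F.billiardStep_orbit_iff hb hy i).2 rfl
  refine ⟨τ, (F.isSimple_iff τ).2 hm, F.length_eq_nine hm, i.val,
    (ZMod.val_lt i).trans_eq hm.symm, ?_, ?_⟩
  · rw [hτ, ZMod.natCast_zmod_val]
  · rw [hτ, Nat.cast_succ, ZMod.natCast_zmod_val]

lemma position_segment_subset_shortestTraces (hb : b ∈ Set.Ioo (0 : ℝ) 1)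
    (hy : y ∈ Set.Ioo (-1 / 2 : ℝ) 1) (i : ZMod 4) :
    segment ℝ (F.orbit b y i).1 (F.orbit b y (i + 1)).1 ×ˢ {(F.orbit b y (i + 1)).2} ⊆
      shortestTraces K := by
  obtain ⟨τ, hsimple, hlength, n, hn, hτ, hτ'⟩ := F.exists_trajectory_through_orbit hb hy i
  rw [← hτ, ← hτ']
  exact fun w hw => ⟨τ, hsimple, hlength, τ.position_segment_subset_trace hn hw⟩

lemma momentum_segment_subset_shortestTraces (hb : b ∈ Set.Ioo (0 : ℝ) 1)
    (hy : y ∈ Set.Ioo (-1 / 2 : ℝ) 1) (i : ZMod 4) :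
    {(F.orbit b y i).1} ×ˢ segment ℝ (F.orbit b y i).2 (F.orbit b y (i + 1)).2 ⊆
      shortestTraces K := by
  obtain ⟨τ, hsimple, hlength, n, hn, hτ, hτ'⟩ := F.exists_trajectory_through_orbit hb hy i
  rw [← hτ, ← hτ']
  exact fun w hw => ⟨τ, hsimple, hlength, τ.momentum_segment_subset_trace hn hw⟩

lemma continuous_posPhase : Continuous fun x : ℝ × ℝ => F.posPhase x.1 x.2 :=
  (F.continuous_point.comp (by fun_prop)).prodMk (F.symm.continuous_point.comp (by fun_prop))

lemma continuous_negPhase : Continuous fun x : ℝ × ℝ => F.negPhase x.1 x.2 :=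
  (F.continuous_point.comp (by fun_prop)).prodMk (F.symm.continuous_point.comp (by fun_prop))

lemma continuous_orbit (i : ZMod 4) : Continuous fun x : ℝ × ℝ => F.orbit x.1 x.2 i := by
  have hreparam : Continuous fun x : ℝ × ℝ => (1 - x.1, 1 / 2 - x.2) := by fun_prop
  have hpos := F.swap.continuous_posPhase.comp hreparam
  have hneg := F.swap.continuous_negPhase.comp hreparam
  fin_cases i
  exacts [F.continuous_posPhase, F.continuous_negPhase, hpos, hneg]

lemma mem_closure_of_forall_Ioo {S : Set (E2 × E2)} {f : ℝ × ℝ → E2 × E2} (hf : Continuous f)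
    (hfS : ∀ b ∈ Set.Ioo (0 : ℝ) 1, ∀ y ∈ Set.Ioo (-1 / 2 : ℝ) 1, f (b, y) ∈ S)
    (hb : b ∈ Set.Icc (0 : ℝ) 1) (hy : y ∈ Set.Icc (-1 / 2 : ℝ) 1) : f (b, y) ∈ closure S := by
  rw [← closure_Ioo (by norm_num)] at hb hy
  exact map_mem_closure₂ (f := fun b y => f (b, y)) hf hb hy hfS

lemma position_segment_subset_closure (hb : b ∈ Set.Icc (0 : ℝ) 1)
    (hy : y ∈ Set.Icc (-1 / 2 : ℝ) 1) (i : ZMod 4) :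
    segment ℝ (F.orbit b y i).1 (F.orbit b y (i + 1)).1 ×ˢ {(F.orbit b y (i + 1)).2} ⊆
      closure (shortestTraces K) := by
  rw [segment_eq_image']
  rintro ⟨_, _⟩ ⟨⟨s, hs, rfl⟩, rfl⟩
  have hi := F.continuous_orbit i
  have hi' := F.continuous_orbit (i + 1)
  refine mem_closure_of_forall_Ioo (f := fun x => ((F.orbit x.1 x.2 i).1 +
    s • ((F.orbit x.1 x.2 (i + 1)).1 - (F.orbit x.1 x.2 i).1), (F.orbit x.1 x.2 (i + 1)).2))
    (by fun_prop) (fun b hb y hy => ?_) hb hy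
  refine F.position_segment_subset_shortestTraces hb hy i ⟨?_, rfl⟩
  rw [segment_eq_image']
  exact ⟨s, hs, rfl⟩

lemma momentum_segment_subset_closure (hb : b ∈ Set.Icc (0 : ℝ) 1)
    (hy : y ∈ Set.Icc (-1 / 2 : ℝ) 1) (i : ZMod 4) :
    {(F.orbit b y i).1} ×ˢ segment ℝ (F.orbit b y i).2 (F.orbit b y (i + 1)).2 ⊆
      closure (shortestTraces K) := by
  rw [segment_eq_image']
  rintro ⟨_, _⟩ ⟨rfl, s, hs, rfl⟩
  have hi := F.continuous_orbit i
  have hi' := F.continuous_orbit (i + 1)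
  refine mem_closure_of_forall_Ioo (f := fun x => ((F.orbit x.1 x.2 i).1, (F.orbit x.1 x.2 i).2 +
    s • ((F.orbit x.1 x.2 (i + 1)).2 - (F.orbit x.1 x.2 i).2)))
    (by fun_prop) (fun b hb y hy => ?_) hb hy
  refine F.momentum_segment_subset_shortestTraces hb hy i ⟨rfl, ?_⟩
  rw [segment_eq_image']
  exact ⟨s, hs, rfl⟩

end TriangleFrame

lemma DualFrame.mem_segment_of_coord_eq (F : DualFrame) {x y z : E2} {s : ℝ}
    (hs : s ∈ Set.Icc (0 : ℝ) 1)
    (h : ∀ i, F.coord z i = F.coord x i + s * (F.coord y i - F.coord x i)) :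
    z ∈ segment ℝ x y := by
  have hz : x + s • (y - x) = z := F.ext_coord fun i => by
    rw [F.coord_add, F.coord_smul, F.coord_sub, h]
  rw [segment_eq_image']
  exact ⟨s, hs, hz⟩

namespace TriangleFrame

variable {K : Set E2} (F : TriangleFrame K) {q p : E2}

lemma mem_closure_of_coord_zero_eq_one (hq : q ∈ K - K) (hp : p ∈ polarBody K)
    (hq0 : F.coord q 0 = 1) (hp12 : F.symm.coord p 2 ≤ F.symm.coord p 1) :
    (q, p) ∈ closure (shortestTraces K) := by
  have hqabs (i) := abs_le.1 (F.mem_hexagon_iff.1 hq i)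
  have hple := F.mem_polarBody_iff.1 hp
  have hqsum := F.sum_coord q
  have hpsum := F.symm.sum_coord p
  -- Here and in the next three lemmas `b`, `y` and `s` are read off from the equations saying that
  -- `(q, p)` divides the relevant segment of `orbit b y` in the ratio `s : 1 - s`.
  set b := -F.coord q 1
  set y := F.symm.coord p 1 - (1 - F.symm.coord p 0) / 2 with hy
  obtain ⟨s, hs, hsy⟩ := exists_mem_Icc_mul_eq (a := (1 - F.symm.coord p 0) / 2) (c := 1 - y)
    (by linarith [hple 0]) (by linarith [hple 1])
  have hbIcc : b ∈ Set.Icc (0 : ℝ) 1 := ⟨by linarith [hqabs 2], by linarith [hqabs 1]⟩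
  have hyIcc : y ∈ Set.Icc (-1 / 2 : ℝ) 1 := ⟨by linarith, by linarith [hple 0, hple 1]⟩
  refine F.momentum_segment_subset_closure hbIcc hyIcc 0
    ⟨F.ext_coord fun i => ?_, F.symm.mem_segment_of_coord_eq hs fun i => ?_⟩
  · change F.coord q i = F.coord (F.posPhase b y).1 i
    rw [coord_posPhase_fst]
    fin_cases i <;> simp <;> linarith
  · change F.symm.coord p i = F.symm.coord (F.posPhase b y).2 i +
      s * (F.symm.coord (F.negPhase b y).2 i - F.symm.coord (F.posPhase b y).2 i)
    rw [coord_posPhase_snd, coord_negPhase_snd]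
    fin_cases i <;> simp <;> linarith

lemma mem_closure_of_one_le_coord_sub (hq : q ∈ K - K) (hp : p ∈ polarBody K)
    (hp1 : F.symm.coord p 1 = 1) (hq02 : 1 ≤ F.coord q 0 - F.coord q 2) :
    (q, p) ∈ closure (shortestTraces K) := by
  have hqabs (i) := abs_le.1 (F.mem_hexagon_iff.1 hq i)
  have hple := F.mem_polarBody_iff.1 hp
  have hqsum := F.sum_coord q
  have hpsum := F.symm.sum_coord p
  set b := 2 - F.coord q 0 + F.coord q 2
  set y := (1 + F.symm.coord p 0) / 2 with hy
  obtain ⟨s, hs, hsb⟩ := exists_mem_Icc_mul_eq (a := 1 - F.coord q 0) (c := b)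
    (by linarith [hqabs 0]) (by linarith [hqabs 2])
  have hbIcc : b ∈ Set.Icc (0 : ℝ) 1 := ⟨by linarith [hqabs 0, hqabs 2], by linarith⟩
  have hyIcc : y ∈ Set.Icc (-1 / 2 : ℝ) 1 := ⟨by linarith [hple 2], by linarith [hple 0]⟩
  refine F.position_segment_subset_closure hbIcc hyIcc 0
    ⟨F.mem_segment_of_coord_eq hs fun i => ?_, F.symm.ext_coord fun i => ?_⟩
  · change F.coord q i = F.coord (F.posPhase b y).1 i +
      s * (F.coord (F.negPhase b y).1 i - F.coord (F.posPhase b y).1 i)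
    rw [coord_posPhase_fst, coord_negPhase_fst]
    fin_cases i <;> simp <;> linarith
  · change F.symm.coord p i = F.symm.coord (F.negPhase b y).2 i
    rw [coord_negPhase_snd]
    fin_cases i <;> simp <;> linarith

lemma mem_closure_of_coord_two_eq_neg_one (hq : q ∈ K - K) (hp : p ∈ polarBody K)
    (hq2 : F.coord q 2 = -1) (hp01 : F.symm.coord p 0 ≤ F.symm.coord p 1) :
    (q, p) ∈ closure (shortestTraces K) := by
  have hqabs (i) := abs_le.1 (F.mem_hexagon_iff.1 hq i)
  have hple := F.mem_polarBody_iff.1 hp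
  have hqsum := F.sum_coord q
  have hpsum := F.symm.sum_coord p
  set b := F.coord q 1
  set y := 1 + (F.symm.coord p 0 - F.symm.coord p 1) / 2 with hy
  obtain ⟨s, hs, hsy⟩ := exists_mem_Icc_mul_eq (a := 1 - F.symm.coord p 1) (c := y + 1 / 2)
    (by linarith [hple 1]) (by linarith [hple 2])
  have hbIcc : b ∈ Set.Icc (0 : ℝ) 1 := ⟨by linarith [hqabs 0], by linarith [hqabs 1]⟩
  have hyIcc : y ∈ Set.Icc (-1 / 2 : ℝ) 1 := ⟨by linarith [hple 1, hple 2], by linarith⟩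
  refine F.momentum_segment_subset_closure hbIcc hyIcc 1
    ⟨F.ext_coord fun i => ?_, F.symm.mem_segment_of_coord_eq hs fun i => ?_⟩
  · change F.coord q i = F.coord (F.negPhase b y).1 i
    rw [coord_negPhase_fst]
    fin_cases i <;> simp <;> linarith
  · change F.symm.coord p i = F.symm.coord (F.negPhase b y).2 i + s *
      (F.symm.coord (F.swap.posPhase (1 - b) (1 / 2 - y)).2 i - F.symm.coord (F.negPhase b y).2 i)
    rw [coord_negPhase_snd, coord_swap_posPhase_snd]
    fin_cases i <;> simp <;> linarith

lemma mem_closure_of_abs_coord_sub_le_one (hq : q ∈ K - K) (hp : p ∈ polarBody K)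
    (hp2 : F.symm.coord p 2 = 1) (hp01 : F.symm.coord p 0 ≤ F.symm.coord p 1)
    (hq01 : |F.coord q 0 - F.coord q 1| ≤ 1) :
    (q, p) ∈ closure (shortestTraces K) := by
  have hqabs (i) := abs_le.1 (F.mem_hexagon_iff.1 hq i)
  have hple := F.mem_polarBody_iff.1 hp
  have hqsum := F.sum_coord q
  have hpsum := F.symm.sum_coord p
  set b := (1 + F.coord q 1 - F.coord q 0) / 2 with hb
  set y := 1 / 2 - F.symm.coord p 1 with hy
  set s := (1 + F.coord q 2) / 2 with hs
  have hbIcc : b ∈ Set.Icc (0 : ℝ) 1 := by constructor <;> linarith [abs_le.1 hq01]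
  have hyIcc : y ∈ Set.Icc (-1 / 2 : ℝ) 1 := ⟨by linarith [hple 1], by linarith⟩
  have hsIcc : s ∈ Set.Icc (0 : ℝ) 1 := by constructor <;> linarith [hqabs 2]
  refine F.position_segment_subset_closure hbIcc hyIcc 1
    ⟨F.mem_segment_of_coord_eq hsIcc fun i => ?_, F.symm.ext_coord fun i => ?_⟩
  · change F.coord q i = F.coord (F.negPhase b y).1 i + s *
      (F.coord (F.swap.posPhase (1 - b) (1 / 2 - y)).1 i - F.coord (F.negPhase b y).1 i)
    rw [coord_negPhase_fst, coord_swap_posPhase_fst]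
    fin_cases i <;> simp <;> linarith
  · change F.symm.coord p i = F.symm.coord (F.swap.posPhase (1 - b) (1 / 2 - y)).2 i
    rw [coord_swap_posPhase_snd]
    fin_cases i <;> simp <;> linarith

lemma mem_closure_of_coord_two_eq_one (hq : q ∈ K - K) (hp : p ∈ polarBody K)
    (hp2 : F.symm.coord p 2 = 1) (hp01 : F.symm.coord p 0 ≤ F.symm.coord p 1) :
    (q, p) ∈ closure (shortestTraces K) := by
  rcases le_or_gt |F.coord q 0 - F.coord q 1| 1 with hmiddle | hcorner
  · exact F.mem_closure_of_abs_coord_sub_le_one hq hp hp2 hp01 hmiddle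
  · rcases lt_abs.1 hcorner with hlt | hlt
    · exact (F.reindex (Equiv.swap 1 2)).mem_closure_of_one_le_coord_sub hq hp hp2 hlt.le
    · rw [neg_sub] at hlt
      exact (F.reindex (finRotate 3)).mem_closure_of_one_le_coord_sub hq hp hp2 hlt.le

include F in
lemma frontier_prod_subset_closure :
    frontier ((K - K) ×ˢ polarBody K) ⊆ closure (shortestTraces K) := by
  have hclosed : IsClosed (K - K) := F.hexagon_eq_polarBody ▸ isClosed_polarBody _
  rw [frontier_prod_eq, hclosed.closure_eq, (isClosed_polarBody K).closure_eq]
  rintro ⟨q, p⟩ (⟨hq, hp⟩ | ⟨hq, hp⟩)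
  · obtain ⟨hpK, i, hi⟩ := F.mem_frontier_polarBody_iff.1 hp
    obtain ⟨σ, rfl, hσ⟩ := exists_perm_apply_le (a := 0) (b := 1) (c := 2) (by decide) (by decide) i
      (F.symm.coord p)
    exact (F.reindex σ).mem_closure_of_coord_two_eq_one hq hpK hi hσ
  · obtain ⟨hqK, i, hi | hi⟩ := F.mem_frontier_hexagon_iff.1 hq
    · obtain ⟨σ, rfl, hσ⟩ := exists_perm_apply_le (a := 2) (b := 1) (c := 0) (by decide) (by decide)
        i (F.symm.coord p)
      exact (F.reindex σ).mem_closure_of_coord_zero_eq_one hqK hp hi hσ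
    · obtain ⟨σ, rfl, hσ⟩ := exists_perm_apply_le (a := 0) (b := 1) (c := 2) (by decide) (by decide)
        i (F.symm.coord p)
      exact (F.reindex σ).mem_closure_of_coord_two_eq_neg_one hqK hp hi hσ

end TriangleFrame

theorem hexagon_trajectories_general (A B C : E2) (hABC : AffineIndependent ℝ ![A, B, C])
    (hcent : A + B + C = 0) (K : Set E2) (hK : K = convexHull ℝ {A, B, C}) :
    (∀ τ : ClassicalTraj (K - K) (polarBody K), τ.IsSimple →
      τ.m = 4 ∧ τ.length = 9) ∧
    (∀ z ∈ frontier ((K - K) ×ˢ polarBody K), ∀ ε : ℝ, 0 < ε →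
      ∃ τ : ClassicalTraj (K - K) (polarBody K), τ.IsSimple ∧ τ.length = 9 ∧
        ∃ w ∈ τ.trace, dist z w < ε) := by
  obtain ⟨F⟩ := exists_triangleFrame hABC hcent hK
  constructor
  · intro τ hτ
    have hm := (F.isSimple_iff τ).1 hτ
    exact ⟨hm, F.length_eq_nine hm⟩
  · intro z hz ε hε
    obtain ⟨w, ⟨τ, hsimple, hlength, hw⟩, hzw⟩ :=
      Metric.mem_closure_iff.1 (F.frontier_prod_subset_closure hz) ε hε
    exact ⟨τ, hsimple, hlength, w, hw, hzw⟩

end Billiard2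

open Billiard2 in
/-- For an equilateral triangle `K` centered at the origin, every simple classical closed
billiard trajectory in the hexagon `K − K` with geometry given by `K°` is 4-periodic and
has length 9; moreover, arbitrarily close to any point of `∂((K−K) × K°)` there passes
such a shortest billiard trajectory. -/
theorem hexagon_trajectories (A B C : E2)
    (hpos : 0 < dist A B) (h1 : dist A B = dist B C) (h2 : dist B C = dist C A)
    (hcent : A + B + C = 0)
    (K : Set E2) (hK : K = convexHull ℝ {A, B, C}) :
    (∀ τ : ClassicalTraj (K - K) (polarBody K), τ.IsSimple →
      τ.m = 4 ∧ τ.length = 9) ∧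
    (∀ z ∈ frontier ((K - K) ×ˢ polarBody K), ∀ ε : ℝ, 0 < ε →
      ∃ τ : ClassicalTraj (K - K) (polarBody K), τ.IsSimple ∧ τ.length = 9 ∧
        ∃ w ∈ τ.trace, dist z w < ε) :=
  hexagon_trajectories_general A B C (affineIndependent_of_dist_eq hpos h1 h2) hcent K hK
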